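/- arXiv:math/0411012 — 6 statements merged into one kernel-verified Lean document; each statement's English description precedes it below -/
import Mathlib

section
/- Let f_1, …, f_m be linear tropical polynomials in n variables (i.e., every exponent vector in each support has total degree at most 1). If the tropical prevariety P = ⋂_{i=1}^m T(f_i) is nonempty, then P is a connected subset of ℝ^n (with the Euclidean topology). -/
open Finset Pointwise

/-- The affine-linear function given by a tropical term with coefficient `c`
and exponent vector `α`. -/
def tropTerm {n : ℕ} (c : ℝ) (α : Fin n → ℕ) (x : Fin n → ℝ) : ℝ :=
  c + ∑ j, (α j : ℝ) * x j

/-- The tropical hypersurface of the tropical polynomial with support `A`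
and coefficients `c`: the set of points where the minimum of the terms is
attained at least twice. -/
def tropHyp {n : ℕ} (A : Finset (Fin n → ℕ)) (c : (Fin n → ℕ) → ℝ) :
    Set (Fin n → ℝ) :=
  {x | ∃ α ∈ A, ∃ β ∈ A, α ≠ β ∧
    tropTerm (c α) α x = tropTerm (c β) β x ∧
    ∀ γ ∈ A, tropTerm (c α) α x ≤ tropTerm (c γ) γ x}

/-- A tropical polynomial: a (finite) support of exponent vectors, and coefficients. -/
structure TropPoly (n : ℕ) where
  supp : Finset (Fin n → ℕ)
  coeff : (Fin n → ℕ) → ℝ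

def TropPoly.hyp {n : ℕ} (f : TropPoly n) : Set (Fin n → ℝ) :=
  tropHyp f.supp f.coeff

/-- Tropical product of two tropical polynomials. -/
noncomputable def TropPoly.mul {n : ℕ} (f g : TropPoly n) : TropPoly n where
  supp := f.supp + g.supp
  coeff := fun γ =>
    sInf {r | ∃ α ∈ f.supp, ∃ β ∈ g.supp, α + β = γ ∧ r = f.coeff α + g.coeff β}

/-- The tropical multiplicative unit (the constant polynomial `0`). -/
def TropPoly.one (n : ℕ) : TropPoly n := ⟨{0}, fun _ => 0⟩

/-- Tropical product of a list of tropical polynomials. -/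
noncomputable def TropPoly.listProd {n : ℕ} (l : List (TropPoly n)) : TropPoly n :=
  l.foldr TropPoly.mul (TropPoly.one n)

/-- The exponent vector `k · e_i`. -/
def single {n : ℕ} (i : Fin n) (k : ℕ) : Fin n → ℕ :=
  fun j => if j = i then k else 0

lemma term_min {n : ℕ} (c : ℝ) (α : Fin n → ℕ) (h : ∑ j, α j ≤ 1) (x y : Fin n → ℝ) (t : ℝ)
    (ht : 0 ≤ t) : tropTerm c α (fun j => min (x j) (y j + t)) =
      min (tropTerm c α x) (tropTerm c α y + t) := by
  unfold tropTerm
  by_cases h0 : ∀ j, α j = 0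
  · simp [h0, ht]
  · push Not at h0
    obtain ⟨i, hi⟩ := h0
    have hs := Finset.add_sum_erase Finset.univ α (Finset.mem_univ i)
    have hi1 : α i = 1 := by omega
    have hz : ∑ j ∈ Finset.univ.erase i, α j = 0 := by omega
    rw [Finset.sum_eq_zero_iff] at hz
    have key : ∀ z : Fin n → ℝ, ∑ j, (α j : ℝ) * z j = z i := by
      intro z
      rw [Finset.sum_eq_single i]
      · simp [hi1]
      · intro j _ hj
        rw [hz j (by simp [hj])]
        simp
      · simp
    rw [key, key, key, add_assoc, min_add_add_left]

lemma min_mem {n : ℕ} (A : Finset (Fin n → ℕ)) (c : (Fin n → ℕ) → ℝ)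
    (h : ∀ α ∈ A, ∑ j, α j ≤ 1) (x y : Fin n → ℝ) (hx : x ∈ tropHyp A c) (hy : y ∈ tropHyp A c)
    (t : ℝ) (ht : 0 ≤ t) : (fun j => min (x j) (y j + t)) ∈ tropHyp A c := by
  obtain ⟨a, ha, b, hb, hab, e, hm⟩ := hx
  obtain ⟨a', ha', b', hb', hab', e', hm'⟩ := hy
  have T : ∀ α ∈ A, tropTerm (c α) α (fun j => min (x j) (y j + t)) =
      min (tropTerm (c α) α x) (tropTerm (c α) α y + t) :=
    fun α hα => term_min _ _ (h α hα) _ _ _ ht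
  rcases le_total (tropTerm (c a) a x) (tropTerm (c a') a' y + t) with hl | hl
  · have va := T a ha
    have vb := T b hb
    rw [min_eq_left (by linarith [hm' a ha])] at va
    rw [min_eq_left (by linarith [hm' b hb])] at vb
    refine ⟨a, ha, b, hb, hab, by rw [va, vb, e], fun γ hγ => ?_⟩
    rw [va, T γ hγ]
    exact le_min (hm γ hγ) (by linarith [hm' γ hγ])
  · have va := T a' ha'
    have vb := T b' hb'
    rw [min_eq_right (by linarith [hm a' ha'])] at va
    rw [min_eq_right (by linarith [hm b' hb'])] at vb
    refine ⟨a', ha', b', hb', hab', by rw [va, vb, e'], fun γ hγ => ?_⟩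
    rw [va, T γ hγ]
    exact le_min (by linarith [hm γ hγ]) (by linarith [hm' γ hγ])

lemma ray_facts {n : ℕ} (x y : Fin n → ℝ) :
    IsPreconnected ((fun (t : ℝ) (j : Fin n) => min (x j) (y j + t)) '' Set.Ici 0) ∧
    x ∈ ((fun (t : ℝ) (j : Fin n) => min (x j) (y j + t)) '' Set.Ici 0) ∧
    (fun j => min (x j) (y j)) ∈
      ((fun (t : ℝ) (j : Fin n) => min (x j) (y j + t)) '' Set.Ici 0) := by
  refine ⟨isPreconnected_Ici.image _ (Continuous.continuousOn (by fun_prop)), ?_, ?_⟩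
  · refine ⟨∑ j, |x j - y j|, Set.mem_Ici.2 (Finset.sum_nonneg fun _ _ => abs_nonneg _), ?_⟩
    funext j
    have h1 := Finset.single_le_sum (f := fun j => |x j - y j|)
      (fun _ _ => abs_nonneg _) (Finset.mem_univ j)
    have h2 := le_abs_self (x j - y j)
    exact min_eq_left (by linarith)
  · exact ⟨0, by simp, by simp⟩

/-- If `f₁, …, fₘ` are linear tropical polynomials in `n` variables and the
tropical prevariety `⋂ i, T(fᵢ)` is nonempty, then it is connected. -/
theorem linear_prevariety_connected (n m : ℕ)
    (A : Fin m → Finset (Fin n → ℕ)) (c : Fin m → (Fin n → ℕ) → ℝ)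
    (hA : ∀ i, (A i).Nonempty)
    (hlin : ∀ i, ∀ α ∈ A i, (∑ j, α j) ≤ 1)
    (hne : (⋂ i, tropHyp (A i) (c i)).Nonempty) :
    IsConnected (⋂ i, tropHyp (A i) (c i)) := by
  refine ⟨hne, isPreconnected_of_forall_pair fun x hx y hy => ?_⟩
  have sub : ∀ u ∈ (⋂ i, tropHyp (A i) (c i)), ∀ v ∈ (⋂ i, tropHyp (A i) (c i)),
      ((fun (t : ℝ) (j : Fin n) => min (u j) (v j + t)) '' Set.Ici 0) ⊆
        ⋂ i, tropHyp (A i) (c i) := by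
    rintro u hu v hv _ ⟨t, ht, rfl⟩
    rw [Set.mem_iInter] at hu hv ⊢
    exact fun i => min_mem _ _ (hlin i) u v (hu i) (hv i) t ht
  obtain ⟨p1, m1, z1⟩ := ray_facts x y
  obtain ⟨p2, m2, z2⟩ := ray_facts y x
  have hc : (fun j => min (y j) (x j)) = fun j => min (x j) (y j) :=
    funext fun j => min_comm _ _
  rw [hc] at z2
  exact ⟨_, Set.union_subset (sub x hx y hy) (sub y hy x hx), Or.inl m1, Or.inr m2,
    p1.union _ z1 z2 p2⟩
end

section
/- Let f = f(x_1, x_2, x_3) be a tropical polynomial in 3 variables of degree at most 2 (every exponent vector α in its support satisfies α_1 + α_2 + α_3 ≤ 2). If T(f) contains every point x ∈ {0,1}^3 with x_1 = 1 or x_2 = 1 or x_3 = 1, then T(f) also contains the point (0,0,0). -/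
open Finset Pointwise

/-- If a quadratic tropical polynomial `f` in three variables has all points of
`{0,1}³` with some coordinate equal to `1` on its tropical hypersurface, then
`(0,0,0) ∈ T(f)` as well. -/
theorem quadric_contains_origin
    (A : Finset (Fin 3 → ℕ)) (c : (Fin 3 → ℕ) → ℝ) (hA : A.Nonempty)
    (hdeg : ∀ α ∈ A, (∑ j, α j) ≤ 2)
    (hcube : ∀ x : Fin 3 → ℝ, (∀ j, x j = 0 ∨ x j = 1) →
      (x 0 = 1 ∨ x 1 = 1 ∨ x 2 = 1) → x ∈ tropHyp A c) :
    (fun _ => (0 : ℝ)) ∈ tropHyp A c := by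
  obtain ⟨α, hα, hmin⟩ := A.exists_min_image c hA
  obtain ⟨i, hi⟩ : ∃ i, α i = 0 := by
    by_contra! h
    have h1 := hdeg α hα
    rw [Fin.sum_univ_three] at h1
    have := h 0
    have := h 1
    have := h 2
    omega
  have key : ∀ γ : Fin 3 → ℕ,
      tropTerm (c γ) γ (fun j => if j = i then (1 : ℝ) else 0) = c γ + γ i := by
    intro γ
    simp [tropTerm]
  have key0 : ∀ γ : Fin 3 → ℕ, tropTerm (c γ) γ (fun _ => (0 : ℝ)) = c γ := by
    intro γ
    simp [tropTerm]
  have main : ∀ β ∈ A, α ≠ β → c β + (β i : ℝ) ≤ c α →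
      (fun _ => (0 : ℝ)) ∈ tropHyp A c := by
    intro β hβ hne hle
    have h0 : (0 : ℝ) ≤ (β i : ℝ) := Nat.cast_nonneg _
    refine ⟨α, hα, β, hβ, hne, ?_, ?_⟩
    · rw [key0, key0]
      exact le_antisymm (hmin β hβ) (by linarith)
    · intro γ hγ
      rw [key0, key0]
      exact hmin γ hγ
  obtain ⟨β, hβ, β₂, hβ₂, hne, heq, hle⟩ :=
    hcube (fun j => if j = i then (1 : ℝ) else 0)
      (by intro j; by_cases h : j = i <;> simp [h])
      (by fin_cases i <;> simp)
  have h1 := hle α hα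
  rw [key, key, hi] at h1
  rw [key, key] at heq
  push_cast at h1
  by_cases h : α = β
  · exact main β₂ hβ₂ (by rw [h]; exact hne) (by linarith)
  · exact main β hβ h (by linarith)
end

section
/- Let f and g be tropical polynomials in n variables. Then the tropical hypersurface of their tropical product is the union of their tropical hypersurfaces: T(f ⊙ g) = T(f) ∪ T(g). -/
open Finset Pointwise

theorem aux_term_add {n : ℕ} (c d : ℝ) (α β : Fin n → ℕ) (x : Fin n → ℝ) :
    tropTerm (c + d) (α + β) x = tropTerm c α x + tropTerm d β x := by
  simp only [tropTerm, Pi.add_apply, Nat.cast_add, add_mul, Finset.sum_add_distrib]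
  ring

theorem aux_finite {n : ℕ} (f g : TropPoly n) (γ : Fin n → ℕ) :
    {r | ∃ α ∈ f.supp, ∃ β ∈ g.supp, α + β = γ ∧ r = f.coeff α + g.coeff β}.Finite := by
  refine ((f.supp ×ˢ g.supp).image
    (fun p => f.coeff p.1 + g.coeff p.2)).finite_toSet.subset ?_
  rintro r ⟨α, hα, β, hβ, -, rfl⟩
  simp only [Finset.coe_image, Set.mem_image, Finset.mem_coe, Finset.mem_product]
  exact ⟨(α, β), ⟨hα, hβ⟩, rfl⟩

theorem aux_le {n : ℕ} (f g : TropPoly n) (x : Fin n → ℝ) {α β : Fin n → ℕ}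
    (hα : α ∈ f.supp) (hβ : β ∈ g.supp) :
    tropTerm ((f.mul g).coeff (α + β)) (α + β) x ≤
      tropTerm (f.coeff α) α x + tropTerm (g.coeff β) β x := by
  rw [← aux_term_add]
  have : (f.mul g).coeff (α + β) ≤ f.coeff α + g.coeff β :=
    csInf_le (aux_finite f g _).bddBelow ⟨α, hα, β, hβ, rfl, rfl⟩
  simp only [tropTerm]
  linarith

theorem aux_ex {n : ℕ} (f g : TropPoly n) (x : Fin n → ℝ) {γ : Fin n → ℕ}
    (hγ : γ ∈ (f.mul g).supp) : ∃ α ∈ f.supp, ∃ β ∈ g.supp, α + β = γ ∧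
    tropTerm ((f.mul g).coeff γ) γ x =
      tropTerm (f.coeff α) α x + tropTerm (g.coeff β) β x := by
  obtain ⟨α, hα, β, hβ, h⟩ := Finset.mem_add.1 hγ
  obtain ⟨α', hα', β', hβ', h', e⟩ :=
    Set.Nonempty.csInf_mem (s := {r | ∃ α ∈ f.supp, ∃ β ∈ g.supp, α + β = γ ∧
      r = f.coeff α + g.coeff β}) ⟨_, α, hα, β, hβ, h, rfl⟩ (aux_finite f g γ)
  refine ⟨α', hα', β', hβ', h', ?_⟩
  rw [← aux_term_add, h', ← e]
  rfl

/-- The tropical hypersurface of a tropical product is the union of the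
tropical hypersurfaces of the factors: `T(f ⊙ g) = T(f) ∪ T(g)`. -/
theorem tropHyp_mul (n : ℕ) (f g : TropPoly n)
    (hf : f.supp.Nonempty) (hg : g.supp.Nonempty) :
    (f.mul g).hyp = f.hyp ∪ g.hyp := by
  ext x
  constructor
  · rintro ⟨γ, hγ, δ, hδ, hne, heq, hmin⟩
    obtain ⟨α, hα, β, hβ, rfl, e⟩ := aux_ex f g x hγ
    obtain ⟨α', hα', β', hβ', rfl, e'⟩ := aux_ex f g x hδ
    have key : ∀ a ∈ f.supp, ∀ b ∈ g.supp,
        tropTerm (f.coeff α) α x + tropTerm (g.coeff β) β x ≤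
          tropTerm (f.coeff a) a x + tropTerm (g.coeff b) b x := fun a ha b hb => by
      rw [← e]
      exact (hmin _ (Finset.add_mem_add ha hb)).trans (aux_le f g x ha hb)
    have k1 := key α hα β' hβ'
    have k2 := key α' hα' β hβ
    by_cases h : α = α'
    · right
      refine ⟨β, hβ, β', hβ', fun h' => hne (by rw [h, h']), by linarith, fun b hb => ?_⟩
      linarith [key α hα b hb]
    · left
      refine ⟨α, hα, α', hα', h, by linarith, fun a ha => ?_⟩
      linarith [key a ha β hβ]
  · have fin : ∀ a ∈ f.supp, ∀ b ∈ g.supp,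
        (∀ a' ∈ f.supp, tropTerm (f.coeff a) a x ≤ tropTerm (f.coeff a') a' x) →
        (∀ b' ∈ g.supp, tropTerm (g.coeff b) b x ≤ tropTerm (g.coeff b') b' x) →
        ∀ γ ∈ (f.mul g).supp, tropTerm ((f.mul g).coeff (a + b)) (a + b) x ≤
          tropTerm ((f.mul g).coeff γ) γ x := by
      intro a ha b hb h1 h2 γ hγ
      obtain ⟨α, hα, β, hβ, -, e⟩ := aux_ex f g x hγ
      linarith [aux_le f g x ha hb, h1 α hα, h2 β hβ]
    rintro (⟨α, hα, α', hα', hne, heq, hmin⟩ | ⟨β, hβ, β', hβ', hne, heq, hmin⟩)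
    · obtain ⟨β, hβ, hb⟩ := g.supp.exists_min_image (fun b => tropTerm (g.coeff b) b x) hg
      have m1 : α + β ∈ (f.mul g).supp := Finset.add_mem_add hα hβ
      have m2 : α' + β ∈ (f.mul g).supp := Finset.add_mem_add hα' hβ
      have f1 := fin α hα β hβ hmin hb
      have f2 := fin α' hα' β hβ (heq ▸ hmin) hb
      exact ⟨_, m1, _, m2, fun h => hne (add_right_cancel h),
        le_antisymm (f1 _ m2) (f2 _ m1), f1⟩
    · obtain ⟨α, hα, ha⟩ := f.supp.exists_min_image (fun b => tropTerm (f.coeff b) b x) hf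
      have m1 : α + β ∈ (f.mul g).supp := Finset.add_mem_add hα hβ
      have m2 : α + β' ∈ (f.mul g).supp := Finset.add_mem_add hα hβ'
      have f1 := fin α hα β hβ ha hmin
      have f2 := fin α hα β' hβ' ha (heq ▸ hmin)
      exact ⟨_, m1, _, m2, fun h => hne (add_left_cancel h),
        le_antisymm (f1 _ m2) (f2 _ m1), f1⟩
end

section
/- Let i_1, i_2, i_3 ∈ {1, …, n} be pairwise distinct indices and τ_1, τ_2, τ_3 ∈ {0,1}. Let f be the cubic tropical polynomial in n variables given as the tropical product f = (0·x_{i_1} ⊕ τ_1) ⊙ (0·x_{i_2} ⊕ τ_2) ⊙ (0·x_{i_3} ⊕ τ_3). Then T(f) = {x ∈ ℝ^n : x_{i_1} = τ_1 or x_{i_2} = τ_2 or x_{i_3} = τ_3}. -/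
open Finset Pointwise

/-- The linear factor. -/
noncomputable def linF {n : ℕ} (i : Fin n) (τ : ℝ) : TropPoly n :=
  ⟨{single i 1, 0}, fun α => if α = 0 then τ else 0⟩

lemma single_ne {n : ℕ} (i : Fin n) : single i 1 ≠ 0 := by
  intro h
  have := congrFun h i
  simp [single] at this

lemma mem_mul_lin {n : ℕ} (i : Fin n) (τ : ℝ) (g : TropPoly n) (γ : Fin n → ℕ) :
    γ ∈ ((linF i τ).mul g).supp ↔ ∃ δ ∈ g.supp, γ = single i 1 + δ ∨ γ = δ := by
  simp only [TropPoly.mul, linF, Finset.mem_add, Finset.mem_insert, Finset.mem_singleton]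
  constructor
  · rintro ⟨a, rfl | rfl, b, hb, rfl⟩
    · exact ⟨b, hb, Or.inl rfl⟩
    · exact ⟨b, hb, Or.inr (zero_add b)⟩
  · rintro ⟨b, hb, rfl | rfl⟩
    · exact ⟨_, Or.inl rfl, b, hb, rfl⟩
    · exact ⟨_, Or.inr rfl, _, hb, zero_add _⟩

lemma coeff_one {n : ℕ} (i : Fin n) (τ : ℝ) (g : TropPoly n) (hg : ∀ α ∈ g.supp, α i = 0)
    (δ : Fin n → ℕ) (hδ : δ ∈ g.supp) :
    ((linF i τ).mul g).coeff (single i 1 + δ) = g.coeff δ := by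
  simp only [TropPoly.mul, linF, Finset.mem_insert, Finset.mem_singleton]
  refine Eq.trans (congrArg sInf ?_) (csInf_singleton (g.coeff δ))
  ext r
  simp only [Set.mem_ofPred_eq, Set.mem_singleton_iff]
  constructor
  · rintro ⟨a, rfl | rfl, b, hb, h, rfl⟩
    · rw [add_left_cancel h]; simp [single_ne]
    · have := congrFun h i
      simp [single, hg b hb, hg δ hδ] at this
  · rintro rfl
    exact ⟨_, Or.inl rfl, δ, hδ, rfl, by simp [single_ne]⟩

lemma coeff_zero {n : ℕ} (i : Fin n) (τ : ℝ) (g : TropPoly n) (hg : ∀ α ∈ g.supp, α i = 0)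
    (δ : Fin n → ℕ) (hδ : δ ∈ g.supp) :
    ((linF i τ).mul g).coeff δ = τ + g.coeff δ := by
  simp only [TropPoly.mul, linF, Finset.mem_insert, Finset.mem_singleton]
  refine Eq.trans (congrArg sInf ?_) (csInf_singleton (τ + g.coeff δ))
  ext r
  simp only [Set.mem_ofPred_eq, Set.mem_singleton_iff]
  constructor
  · rintro ⟨a, rfl | rfl, b, hb, h, rfl⟩
    · have := congrFun h i
      simp [single, hg b hb, hg δ hδ] at this
    · rw [zero_add] at h; subst h; simp
  · rintro rfl
    exact ⟨_, Or.inr rfl, δ, hδ, zero_add _, by simp⟩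

lemma term_one {n : ℕ} (i : Fin n) (c : ℝ) (δ : Fin n → ℕ) (x : Fin n → ℝ) :
    tropTerm c (single i 1 + δ) x = x i + tropTerm c δ x := by
  simp [tropTerm, single, add_mul, Finset.sum_add_distrib]
  ring

lemma hyp_mul_lin {n : ℕ} (i : Fin n) (τ : ℝ) (g : TropPoly n) (hg : ∀ α ∈ g.supp, α i = 0)
    (hne : g.supp.Nonempty) :
    ((linF i τ).mul g).hyp = {x | x i = τ ∨ x ∈ g.hyp} := by
  have t1 : ∀ x, ∀ δ ∈ g.supp,
      tropTerm (((linF i τ).mul g).coeff (single i 1 + δ)) (single i 1 + δ) x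
        = x i + tropTerm (g.coeff δ) δ x := fun x δ hδ => by
    rw [coeff_one i τ g hg δ hδ, term_one]
  have t0 : ∀ x, ∀ δ ∈ g.supp,
      tropTerm (((linF i τ).mul g).coeff δ) δ x
        = τ + tropTerm (g.coeff δ) δ x := fun x δ hδ => by
    rw [coeff_zero i τ g hg δ hδ]; simp [tropTerm, add_assoc]
  have m1 : ∀ δ ∈ g.supp, single i 1 + δ ∈ ((linF i τ).mul g).supp := fun δ h =>
    (mem_mul_lin i τ g _).2 ⟨δ, h, Or.inl rfl⟩
  have m0 : ∀ δ ∈ g.supp, δ ∈ ((linF i τ).mul g).supp := fun δ h =>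
    (mem_mul_lin i τ g _).2 ⟨δ, h, Or.inr rfl⟩
  ext x
  simp only [TropPoly.hyp, tropHyp, Set.mem_ofPred_eq]
  constructor
  · rintro ⟨α, hα, β, hβ, hab, he, hm⟩
    obtain ⟨a, ha, ha'⟩ := (mem_mul_lin i τ g α).1 hα
    obtain ⟨b, hb, hb'⟩ := (mem_mul_lin i τ g β).1 hβ
    have q1 := fun γ hγ => t1 x γ hγ ▸ hm _ (m1 γ hγ)
    have q0 := fun γ hγ => t0 x γ hγ ▸ hm _ (m0 γ hγ)
    rcases ha' with rfl | rfl <;> rcases hb' with rfl | rfl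
    · rw [t1 x _ ha, t1 x _ hb] at he
      refine Or.inr ⟨a, ha, b, hb, fun h => hab (h ▸ rfl), by linarith, fun γ hγ => ?_⟩
      have := q1 γ hγ
      rw [t1 x _ ha] at this
      linarith
    · left
      have h1 := q1 _ hb
      have h0 := q0 _ ha
      rw [t1 x _ ha] at h1 h0 he
      rw [t0 x _ hb] at he
      linarith
    · left
      have h1 := q1 _ ha
      have h0 := q0 _ hb
      rw [t0 x _ ha] at h1 h0 he
      rw [t1 x _ hb] at he
      linarith
    · rw [t0 x _ ha, t0 x _ hb] at he
      refine Or.inr ⟨_, ha, _, hb, hab, by linarith, fun γ hγ => ?_⟩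
      have := q0 γ hγ
      rw [t0 x _ ha] at this
      linarith
  · rintro (h | ⟨a, ha, b, hb, hab, he, hm⟩)
    · obtain ⟨a, ha, hm⟩ := g.supp.exists_min_image (fun δ => tropTerm (g.coeff δ) δ x) hne
      refine ⟨_, m1 a ha, a, m0 a ha, fun h => single_ne i (by simpa using h), ?_, ?_⟩
      · rw [t1 x a ha, t0 x a ha, h]
      · intro γ hγ
        obtain ⟨c, hc, rfl | rfl⟩ := (mem_mul_lin i τ g γ).1 hγ
        · rw [t1 x a ha, t1 x c hc]; linarith [hm c hc]
        · rw [t1 x a ha, t0 x _ hc]; linarith [hm _ hc]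
    · rcases le_total (x i) τ with h | h
      · refine ⟨_, m1 a ha, _, m1 b hb, fun h => hab (add_left_cancel h), ?_, ?_⟩
        · rw [t1 x a ha, t1 x b hb, he]
        · intro γ hγ
          obtain ⟨c, hc, rfl | rfl⟩ := (mem_mul_lin i τ g γ).1 hγ
          · rw [t1 x a ha, t1 x c hc]; linarith [hm c hc]
          · rw [t1 x a ha, t0 x _ hc]; linarith [hm _ hc]
      · refine ⟨_, m0 a ha, _, m0 b hb, hab, ?_, ?_⟩
        · rw [t0 x a ha, t0 x b hb, he]
        · intro γ hγ
          obtain ⟨c, hc, rfl | rfl⟩ := (mem_mul_lin i τ g γ).1 hγ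
          · rw [t0 x a ha, t1 x c hc]; linarith [hm c hc]
          · rw [t0 x a ha, t0 x _ hc]; linarith [hm _ hc]

lemma supp_mul_lin {n : ℕ} (i j : Fin n) (hij : i ≠ j) (τ : ℝ) (g : TropPoly n)
    (hg : ∀ α ∈ g.supp, α i = 0) : ∀ α ∈ ((linF j τ).mul g).supp, α i = 0 := by
  intro α hα
  obtain ⟨c, hc, rfl | rfl⟩ := (mem_mul_lin j τ g α).1 hα
  · simp [single, hij, hg c hc]
  · exact hg _ hc

lemma ne_mul_lin {n : ℕ} (j : Fin n) (τ : ℝ) (g : TropPoly n)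
    (hg : g.supp.Nonempty) : ((linF j τ).mul g).supp.Nonempty := by
  obtain ⟨c, hc⟩ := hg
  exact ⟨c, (mem_mul_lin j τ g c).2 ⟨c, hc, Or.inr rfl⟩⟩

/-- For pairwise distinct indices `i₁, i₂, i₃` and `τ₁, τ₂, τ₃ ∈ {0,1}`, the
tropical hypersurface of the cubic tropical product
`(0·x_{i₁} ⊕ τ₁) ⊙ (0·x_{i₂} ⊕ τ₂) ⊙ (0·x_{i₃} ⊕ τ₃)` is
`{x : x_{i₁} = τ₁ or x_{i₂} = τ₂ or x_{i₃} = τ₃}`. -/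
theorem three_clause_hypersurface (n : ℕ) (i₁ i₂ i₃ : Fin n)
    (h12 : i₁ ≠ i₂) (h13 : i₁ ≠ i₃) (h23 : i₂ ≠ i₃)
    (τ₁ τ₂ τ₃ : ℝ) (hτ₁ : τ₁ = 0 ∨ τ₁ = 1) (hτ₂ : τ₂ = 0 ∨ τ₂ = 1)
    (hτ₃ : τ₃ = 0 ∨ τ₃ = 1) :
    (TropPoly.listProd
        [⟨{single i₁ 1, 0}, fun α => if α = 0 then τ₁ else 0⟩,
         ⟨{single i₂ 1, 0}, fun α => if α = 0 then τ₂ else 0⟩,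
         ⟨{single i₃ 1, 0}, fun α => if α = 0 then τ₃ else 0⟩]).hyp
      = {x : Fin n → ℝ | x i₁ = τ₁ ∨ x i₂ = τ₂ ∨ x i₃ = τ₃} := by
  have o : ∀ i, ∀ α ∈ (TropPoly.one n).supp, α i = 0 := by
    intro i α hα
    simp only [TropPoly.one, Finset.mem_singleton] at hα
    simp [hα]
  have on : (TropPoly.one n).supp.Nonempty := ⟨0, by simp [TropPoly.one]⟩
  have oh : ∀ x, x ∉ (TropPoly.one n).hyp := by
    rintro x ⟨α, hα, β, hβ, hab, -⟩
    simp only [TropPoly.one, Finset.mem_singleton] at hα hβ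
    exact hab (hα.trans hβ.symm)
  change ((linF i₁ τ₁).mul ((linF i₂ τ₂).mul ((linF i₃ τ₃).mul (TropPoly.one n)))).hyp = _
  rw [hyp_mul_lin _ _ _ (supp_mul_lin _ _ h12 _ _ (supp_mul_lin _ _ h13 _ _ (o _)))
      (ne_mul_lin _ _ _ (ne_mul_lin _ _ _ on)),
    hyp_mul_lin _ _ _ (supp_mul_lin _ _ h23 _ _ (o _)) (ne_mul_lin _ _ _ on),
    hyp_mul_lin _ _ _ (o _) on]
  ext x
  simp [oh]
end

section
/- Let A = (a_{ij}) ∈ ℝ^{k×k} and let σ ∈ S_k be a permutation attaining the tropical determinant, i.e., Σ_i a_{i,σ(i)} = det_trop(A). For each j ∈ {1, …, k} let A_j be any matrix obtained from A by replacing the single entry (j, σ(j)) by a strictly larger real value and leaving all other entries unchanged. Then A is tropically singular if and only if det_trop(A_j) = det_trop(A) for some j ∈ {1, …, k}. -/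
open Finset

/-- The tropical determinant of a real `k × k` matrix:
`min_{σ ∈ S_k} Σ_i a_{i,σ(i)}`. -/
def tropDet {k : ℕ} (A : Matrix (Fin k) (Fin k) ℝ) : ℝ :=
  Finset.univ.inf' ⟨1, Finset.mem_univ 1⟩
    (fun σ : Equiv.Perm (Fin k) => ∑ i, A i (σ i))

/-- A matrix is tropically singular if the minimum in the tropical determinant
is attained by at least two distinct permutations. -/
def TropSingular {k : ℕ} (A : Matrix (Fin k) (Fin k) ℝ) : Prop :=
  ∃ σ τ : Equiv.Perm (Fin k), σ ≠ τ ∧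
    (∑ i, A i (σ i)) = tropDet A ∧ (∑ i, A i (τ i)) = tropDet A

theorem tropDet_le' {k : ℕ} (A : Matrix (Fin k) (Fin k) ℝ) (τ : Equiv.Perm (Fin k)) :
    tropDet A ≤ ∑ i, A i (τ i) :=
  Finset.inf'_le (fun σ : Equiv.Perm (Fin k) => ∑ i, A i (σ i)) (Finset.mem_univ τ)

theorem exists_tropDet_eq {k : ℕ} (A : Matrix (Fin k) (Fin k) ℝ) :
    ∃ τ : Equiv.Perm (Fin k), tropDet A = ∑ i, A i (τ i) := by
  obtain ⟨τ, -, h⟩ := Finset.exists_mem_eq_inf' (s := Finset.univ) ⟨1, Finset.mem_univ 1⟩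
    (fun σ : Equiv.Perm (Fin k) => ∑ i, A i (σ i))
  exact ⟨τ, h⟩

/-- Let `σ` attain the tropical determinant of `A`, and for each `j` let `B j`
be obtained from `A` by strictly increasing the single entry `(j, σ j)`. Then
`A` is tropically singular iff `tropDet (B j) = tropDet A` for some `j`. -/
theorem tropSingular_iff (k : ℕ) (A : Matrix (Fin k) (Fin k) ℝ)
    (σ : Equiv.Perm (Fin k)) (hσ : (∑ i, A i (σ i)) = tropDet A)
    (B : Fin k → Matrix (Fin k) (Fin k) ℝ)
    (hB : ∀ j, A j (σ j) < (B j) j (σ j) ∧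
      ∀ p q, (p, q) ≠ (j, σ j) → (B j) p q = A p q) :
    TropSingular A ↔ ∃ j, tropDet (B j) = tropDet A := by
  have hle : ∀ j p q, A p q ≤ B j p q := by
    intro j p q
    by_cases h : (p, q) = (j, σ j)
    · obtain ⟨rfl, rfl⟩ := Prod.mk.inj h
      exact (hB p).1.le
    · exact ((hB j).2 p q h).ge
  constructor
  · intro h
    have : ∃ τ : Equiv.Perm (Fin k), τ ≠ σ ∧ (∑ i, A i (τ i)) = tropDet A := by
      obtain ⟨a, b, hab, ha, hb⟩ := h
      by_cases hc : a = σ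
      · exact ⟨b, fun e => hab (hc.trans e.symm), hb⟩
      · exact ⟨a, hc, ha⟩
    obtain ⟨τ, hne, hτ⟩ := this
    obtain ⟨j, hj⟩ : ∃ j, τ j ≠ σ j := by
      by_contra! hh
      exact hne (Equiv.ext hh)
    refine ⟨j, le_antisymm ?_ ?_⟩
    · rw [← hτ]
      refine (tropDet_le' (B j) τ).trans (le_of_eq (Finset.sum_congr rfl fun i _ => ?_))
      apply (hB j).2
      intro e
      obtain ⟨rfl, e2⟩ := Prod.mk.inj e
      exact hj e2
    · obtain ⟨ρ, hρ⟩ := exists_tropDet_eq (B j)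
      rw [hρ]
      exact (tropDet_le' A ρ).trans (Finset.sum_le_sum fun i _ => hle j i (ρ i))
  · rintro ⟨j, hj⟩
    obtain ⟨τ, hτ⟩ := exists_tropDet_eq (B j)
    refine ⟨σ, τ, ?_, hσ, le_antisymm ?_ (tropDet_le' A τ)⟩
    · rintro rfl
      have : ∑ i, A i (σ i) < ∑ i, B j i (σ i) :=
        Finset.sum_lt_sum (fun i _ => hle j i (σ i)) ⟨j, Finset.mem_univ j, (hB j).1⟩
      linarith
    · rw [← hj, hτ]
      exact Finset.sum_le_sum fun i _ => hle j i (τ i)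
end

section
/- Let f_1, …, f_m be tropical polynomials in n variables. Then there exist finitely many closed convex subsets Q_1, …, Q_t of ℝ^n, each of which is the solution set of finitely many affine linear equations and non-strict affine linear inequalities with coefficients taken from the exponents and coefficients of the f_i, such that ⋂_{i=1}^m T(f_i) = ⋃_{s=1}^t Q_s. In particular, every tropical prevariety is a closed subset of ℝ^n and a finite union of convex sets. -/
open Finset Pointwise

/-- `R` is an affine-linear equation or non-strict inequality between two
tropical terms of the polynomials `f_i` (with support `A i` and coefficients
`c i`). -/
def IsTermConstraint {n m : ℕ} (A : Fin m → Finset (Fin n → ℕ))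
    (c : Fin m → (Fin n → ℕ) → ℝ) (R : Set (Fin n → ℝ)) : Prop :=
  ∃ i i' : Fin m, ∃ α ∈ A i, ∃ β ∈ A i',
    R = {x | tropTerm (c i α) α x = tropTerm (c i' β) β x} ∨
    R = {x | tropTerm (c i α) α x ≤ tropTerm (c i' β) β x}

theorem tropTerm_continuous {n : ℕ} (c : ℝ) (α : Fin n → ℕ) : Continuous (tropTerm c α) := by
  unfold tropTerm
  fun_prop

theorem tropTerm_combo {n : ℕ} (c : ℝ) (α : Fin n → ℕ) (x y : Fin n → ℝ) (a b : ℝ)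
    (hab : a + b = 1) :
    tropTerm c α (a • x + b • y) = a * tropTerm c α x + b * tropTerm c α y := by
  have h : ∑ j, (α j : ℝ) * (a • x + b • y) j
      = a * ∑ j, (α j : ℝ) * x j + b * ∑ j, (α j : ℝ) * y j := by
    rw [Finset.mul_sum, Finset.mul_sum, ← Finset.sum_add_distrib]
    refine Finset.sum_congr rfl fun j _ => ?_
    simp only [Pi.add_apply, Pi.smul_apply, smul_eq_mul]
    ring
  unfold tropTerm
  rw [h]
  linear_combination (-c) * hab

theorem IsTermConstraint.isClosed {n m : ℕ} {A : Fin m → Finset (Fin n → ℕ)}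
    {c : Fin m → (Fin n → ℕ) → ℝ} {R : Set (Fin n → ℝ)} (h : IsTermConstraint A c R) :
    IsClosed R := by
  obtain ⟨i, i', α, _, β, _, rfl | rfl⟩ := h
  · exact isClosed_eq (tropTerm_continuous _ _) (tropTerm_continuous _ _)
  · exact isClosed_le (tropTerm_continuous _ _) (tropTerm_continuous _ _)

theorem IsTermConstraint.convex {n m : ℕ} {A : Fin m → Finset (Fin n → ℕ)}
    {c : Fin m → (Fin n → ℕ) → ℝ} {R : Set (Fin n → ℝ)} (h : IsTermConstraint A c R) :
    Convex ℝ R := by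
  obtain ⟨i, i', α, _, β, _, rfl | rfl⟩ := h
  · intro x hx y hy a b ha hb hab
    simp only [Set.mem_setOf_eq] at *
    rw [tropTerm_combo _ _ _ _ _ _ hab, tropTerm_combo _ _ _ _ _ _ hab, hx, hy]
  · intro x hx y hy a b ha hb hab
    simp only [Set.mem_setOf_eq] at *
    rw [tropTerm_combo _ _ _ _ _ _ hab, tropTerm_combo _ _ _ _ _ _ hab]
    exact add_le_add (mul_le_mul_of_nonneg_left hx ha) (mul_le_mul_of_nonneg_left hy hb)

/-- A tropical prevariety `⋂ i, T(f_i)` is a finite union of closed convex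
sets `Q s`, each being the solution set of finitely many affine linear
equations and non-strict inequalities between tropical terms of the `f_i`;
in particular it is closed. -/
theorem prevariety_union_of_polyhedra (n m : ℕ)
    (A : Fin m → Finset (Fin n → ℕ)) (c : Fin m → (Fin n → ℕ) → ℝ)
    (hA : ∀ i, (A i).Nonempty) :
    (∃ (t : ℕ) (Q : Fin t → Set (Fin n → ℝ)),
      (∀ s, IsClosed (Q s) ∧ Convex ℝ (Q s) ∧
        ∃ F : Set (Set (Fin n → ℝ)), F.Finite ∧
          (∀ R ∈ F, IsTermConstraint A c R) ∧ Q s = ⋂₀ F) ∧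
      (⋂ i, tropHyp (A i) (c i)) = ⋃ s, Q s) ∧
    IsClosed (⋂ i, tropHyp (A i) (c i)) := by
  have key : ∃ (t : ℕ) (Q : Fin t → Set (Fin n → ℝ)),
      (∀ s, IsClosed (Q s) ∧ Convex ℝ (Q s) ∧
        ∃ F : Set (Set (Fin n → ℝ)), F.Finite ∧
          (∀ R ∈ F, IsTermConstraint A c R) ∧ Q s = ⋂₀ F) ∧
      (⋂ i, tropHyp (A i) (c i)) = ⋃ s, Q s := by
    let S := {p : ∀ i, (A i) × (A i) // ∀ i, (p i).1 ≠ (p i).2}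
    obtain ⟨t, ⟨e⟩⟩ := Finite.exists_equiv_fin S
    let F : S → Set (Set (Fin n → ℝ)) := fun p =>
      Set.range (fun i => {x | tropTerm (c i (p.1 i).1) (p.1 i).1 x
        = tropTerm (c i (p.1 i).2) (p.1 i).2 x}) ∪
      Set.range (fun q : (Σ i, (A i)) => {x | tropTerm (c q.1 (p.1 q.1).1) (p.1 q.1).1 x
        ≤ tropTerm (c q.1 q.2) q.2 x})
    have hF : ∀ p, ∀ R ∈ F p, IsTermConstraint A c R := by
      rintro p R (⟨i, rfl⟩ | ⟨⟨i, γ⟩, rfl⟩)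
      · exact ⟨i, i, _, (p.1 i).1.2, _, (p.1 i).2.2, Or.inl rfl⟩
      · exact ⟨i, i, _, (p.1 i).1.2, _, γ.2, Or.inr rfl⟩
    refine ⟨t, fun s => ⋂₀ F (e.symm s), fun s => ⟨?_, ?_, F (e.symm s), ?_, hF _, rfl⟩, ?_⟩
    · exact isClosed_sInter fun R hR => (hF _ R hR).isClosed
    · exact convex_sInter fun R hR => (hF _ R hR).convex
    · exact (Set.finite_range _).union (Set.finite_range _)
    · ext x
      simp only [Set.mem_iInter, Set.mem_iUnion]
      constructor
      · intro h
        choose α hα β hβ hne heq hle using h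
        refine ⟨e ⟨fun i => (⟨α i, hα i⟩, ⟨β i, hβ i⟩),
          fun i hi => hne i (congrArg Subtype.val hi)⟩, ?_⟩
        rw [Equiv.symm_apply_apply]
        rintro R (⟨i, rfl⟩ | ⟨⟨i, γ⟩, rfl⟩)
        · exact heq i
        · exact hle i γ γ.2
      · rintro ⟨s, hs⟩ i
        generalize e.symm s = p at hs
        refine ⟨_, (p.1 i).1.2, _, (p.1 i).2.2, fun h => p.2 i (Subtype.ext h), ?_, ?_⟩
        · exact hs _ (Or.inl ⟨i, rfl⟩)
        · intro γ hγ
          exact hs _ (Or.inr ⟨⟨i, ⟨γ, hγ⟩⟩, rfl⟩)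
  refine ⟨key, ?_⟩
  obtain ⟨t, Q, hQ, h⟩ := key
  rw [h]
  exact isClosed_iUnion_of_finite fun s => (hQ s).1
end
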